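/- Signed permutations of B_n are in bijection with pairs of standard domino tableaux of the same shape, where the shape is a partition of 2n with empty 2-core. -/

import Mathlib

open scoped Classical

noncomputable section

/-- A signed permutation of `{1, ..., n}`: a permutation `f` of `ℤ` with
`f(-i) = -f(i)` which is the identity outside `{-n, ..., n}`. -/
def IsSignedPerm (n : ℕ) (f : Equiv.Perm ℤ) : Prop :=
  (∀ i : ℤ, f (-i) = -f i) ∧ ∀ i : ℤ, (n : ℤ) < |i| → f i = i

/-- Two cells of a Young diagram are adjacent (form a possible domino). -/
def dominoAdj (c d : ℕ × ℕ) : Prop :=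
  (c.1 = d.1 ∧ (c.2 + 1 = d.2 ∨ d.2 + 1 = c.2)) ∨
  (c.2 = d.2 ∧ (c.1 + 1 = d.1 ∨ d.1 + 1 = c.1))

/-- `tile` is a tiling of the Young diagram `μ` by dominoes: it is an involution of
the cells of `μ` matching each cell with an adjacent one (and the identity elsewhere). -/
def IsDominoTiling (μ : YoungDiagram) (tile : ℕ × ℕ → ℕ × ℕ) : Prop :=
  (∀ c ∈ μ.cells, tile c ∈ μ.cells ∧ tile (tile c) = c ∧ dominoAdj c (tile c)) ∧
  ∀ c ∉ μ.cells, tile c = c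

/-- `(tile, lab)` is a semistandard domino tableau of shape `μ`: a domino tiling of `μ`
with non-negative integer labels (constant on each domino), weakly increasing along rows
and strictly increasing down columns (where the two cells of a vertical domino do not
count as a column violation). Labels vanish outside `μ`. -/
def IsSSDT (μ : YoungDiagram) (tile : ℕ × ℕ → ℕ × ℕ) (lab : ℕ × ℕ → ℕ) : Prop :=
  IsDominoTiling μ tile ∧
  (∀ c ∈ μ.cells, lab (tile c) = lab c) ∧
  (∀ c ∉ μ.cells, lab c = 0) ∧
  (∀ i j : ℕ, (i, j) ∈ μ.cells → (i, j + 1) ∈ μ.cells → lab (i, j) ≤ lab (i, j + 1)) ∧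
  (∀ i j : ℕ, (i, j) ∈ μ.cells → (i + 1, j) ∈ μ.cells → tile (i, j) ≠ (i + 1, j) →
    lab (i, j) < lab (i + 1, j))

/-- The extra rule on semistandard domino tableaux: if the top-leftmost domino is
vertical then it cannot be labelled `0`. -/
def ZeroRule (μ : YoungDiagram) (tile : ℕ × ℕ → ℕ × ℕ) (lab : ℕ × ℕ → ℕ) : Prop :=
  tile (0, 0) = (1, 0) → lab (0, 0) ≠ 0

/-- `(tile, lab)` is a standard domino tableau of shape `μ` with `n` dominoes:
a semistandard domino tableau in which each label `1, ..., n` is used by exactly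
one domino. -/
def IsSDT (μ : YoungDiagram) (n : ℕ) (tile : ℕ × ℕ → ℕ × ℕ) (lab : ℕ × ℕ → ℕ) : Prop :=
  IsSSDT μ tile lab ∧ (∀ c ∈ μ.cells, 1 ≤ lab c ∧ lab c ≤ n) ∧
  ∀ k, 1 ≤ k → k ≤ n → (μ.cells.filter fun c => lab c = k).card = 2

/-- Standard domino tableaux of shape `μ` with `n` dominoes. -/
def SDT (μ : YoungDiagram) (n : ℕ) :=
  {x : (ℕ × ℕ → ℕ × ℕ) × (ℕ × ℕ → ℕ) // IsSDT μ n x.1 x.2}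

/-!
A Young diagram is determined by its *profile* `a : ℤ → ℤ`, where `a k` is the column of the first
cell on the diagonal `j - i = k` lying outside the diagram. Profiles are the sequences with steps
`0` or `1` that agree with `max k 0` up to finitely many `k`, and adding a domino to the diagram
means adding `1` to the profile at two consecutive diagonals `k` and `k + 1`. The domino fits when
the steps `k - 1 → k` and `k + 1 → k + 2` are `0` and `1`, and it can be removed when they are `1`
and `0`; telescoping the second differences shows that two more dominoes can be added than removed.
If dominoes fit on `k, k + 1` and on `l, l + 1` with `k ≠ l`, then each still fits after the other
has been added, and likewise for removals; so two distinct diagrams have a common upper cover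
exactly when they have a common lower one, and then both are unique. Domino addition is thus the
covering relation of a 2-differential poset, and Stanley's `UD` induction counts `2 ^ n * n!` pairs
of saturated chains of length `n` with a common endpoint.

The cells labelled at most `k` in a standard domino tableau form a diagram, so standard domino
tableaux are such chains. On the other side, the signed permutations of `{1, ..., n + 1}` act
transitively on the `2 (n + 1)` nonzero points of `{-n - 1, ..., n + 1}`, with the signed
permutations of `{1, ..., n}` as a point stabilizer; hence there are `2 ^ n * n!` of them as well.
-/

/-! ### Profiles -/

section Profile

open Filter

/-- The content of the cell `(i, j)`: the index `j - i` of the diagonal containing it. -/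
def content (c : ℕ × ℕ) : ℤ := c.2 - c.1

/-- The sequences that occur as profiles of Young diagrams, see `profile` and
`IsProfile.exists_profile_eq`. They encode the boundary of a diagram as a lattice path, step `0`
being a vertical and step `1` a horizontal unit; `max k 0` is the profile of the empty diagram. -/
structure IsProfile (a : ℤ → ℤ) : Prop where
  step : ∀ k, a (k + 1) = a k ∨ a (k + 1) = a k + 1
  eventually_eq : ∀ᶠ k in cofinite, a k = max k 0

variable {a : ℤ → ℤ}

namespace IsProfile

theorem monotone (ha : IsProfile a) : Monotone a :=
  monotone_int_of_le_succ fun k => by have := ha.step k; omega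

theorem monotone_id_sub (ha : IsProfile a) : Monotone fun k => k - a k :=
  monotone_int_of_le_succ fun k => by have := ha.step k; omega

theorem eventually_atTop (ha : IsProfile a) : ∀ᶠ k in atTop, a k = k := by
  filter_upwards [atTop_le_cofinite ha.eventually_eq, eventually_ge_atTop 0] with k hk h0
  rw [hk, max_eq_left h0]

theorem eventually_atBot (ha : IsProfile a) : ∀ᶠ k in atBot, a k = 0 := by
  filter_upwards [atBot_le_cofinite ha.eventually_eq, eventually_le_atBot 0] with k hk h0
  rw [hk, max_eq_right h0]

theorem nonneg (ha : IsProfile a) (k : ℤ) : 0 ≤ a k := by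
  obtain ⟨m, hmk, hm⟩ := ((eventually_le_atBot k).and ha.eventually_atBot).exists
  exact hm ▸ ha.monotone hmk

theorem le_apply (ha : IsProfile a) (k : ℤ) : k ≤ a k := by
  obtain ⟨m, hkm, hm⟩ := ((eventually_ge_atTop k).and ha.eventually_atTop).exists
  have := ha.monotone_id_sub hkm
  grind

theorem congr_cofinite {b : ℤ → ℤ} (ha : IsProfile a) (hab : b =ᶠ[cofinite] a)
    (hb : ∀ k, b (k + 1) = b k ∨ b (k + 1) = b k + 1) : IsProfile b :=
  ⟨hb, by filter_upwards [hab, ha.eventually_eq] with k h₁ h₂ using h₁.trans h₂⟩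

theorem ext_of_forall_lt_iff {b : ℤ → ℤ} (ha : IsProfile a) (hb : IsProfile b)
    (h : ∀ c, (c.2 : ℤ) < a (content c) ↔ (c.2 : ℤ) < b (content c)) : a = b := by
  funext k
  have key : ∀ j : ℤ, 0 ≤ j → k ≤ j → (j < a k ↔ j < b k) := fun j h₀ hk => by
    have hc : content ((j - k).toNat, j.toNat) = k := by simp only [content]; omega
    simpa only [hc, Int.toNat_of_nonneg h₀] using h ((j - k).toNat, j.toNat)
  have h₁ := key _ (ha.nonneg k) (ha.le_apply k)
  have h₂ := key _ (hb.nonneg k) (hb.le_apply k)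
  omega

end IsProfile

/-- The effect on a profile of adding a domino on the diagonals `k` and `k + 1`. -/
def bump (k x : ℤ) : ℤ := if x = k ∨ x = k + 1 then 1 else 0

theorem bump_injective : Function.Injective bump := fun k l h => by
  have h₁ := congrFun h k
  have h₂ := congrFun h l
  grind [bump]

theorem add_bump_eventuallyEq (a : ℤ → ℤ) (k : ℤ) : a + bump k =ᶠ[cofinite] a := by
  filter_upwards [(Set.toFinite {k, k + 1}).eventually_cofinite_notMem] with x hx
  exact (congrArg (a x + ·) (if_neg hx)).trans (add_zero _)

namespace IsProfile

theorem add_bump_iff (ha : IsProfile a) {k : ℤ} :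
    IsProfile (a + bump k) ↔ a k = a (k - 1) ∧ a (k + 2) = a (k + 1) + 1 := by
  constructor
  · intro h
    have h₁ := h.step (k - 1)
    have h₂ := h.step (k + 1)
    have h₃ := ha.step (k - 1)
    have h₄ := ha.step (k + 1)
    simp only [Pi.add_apply, bump] at h₁ h₂
    grind
  · rintro ⟨h₁, h₂⟩
    refine ha.congr_cofinite (add_bump_eventuallyEq a k) fun x => ?_
    have := ha.step x
    simp only [Pi.add_apply, bump]
    grind

theorem sub_bump_iff (ha : IsProfile a) {k : ℤ} :
    IsProfile (a - bump k) ↔ a k = a (k - 1) + 1 ∧ a (k + 2) = a (k + 1) := by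
  constructor
  · intro h
    have h₁ := h.step (k - 1)
    have h₂ := h.step (k + 1)
    have h₃ := ha.step (k - 1)
    have h₄ := ha.step (k + 1)
    simp only [Pi.sub_apply, bump] at h₁ h₂
    grind
  · rintro ⟨h₁, h₂⟩
    have heq := add_bump_eventuallyEq (a - bump k) k
    rw [sub_add_cancel] at heq
    refine ha.congr_cofinite heq.symm fun x => ?_
    have := ha.step x
    simp only [Pi.sub_apply, bump]
    grind

theorem of_add_bump_of_add_bump {k l : ℤ} (hkl : k ≠ l) (hk : IsProfile (a + bump k))
    (hl : IsProfile (a + bump l)) : IsProfile a := by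
  refine hk.congr_cofinite (add_bump_eventuallyEq a k).symm fun x => ?_
  have h₁ := hk.step x
  have h₂ := hl.step x
  simp only [Pi.add_apply, bump] at h₁ h₂
  grind

theorem add_bump_add_bump {k l : ℤ} (hkl : k ≠ l) (hk : IsProfile (a + bump k))
    (hl : IsProfile (a + bump l)) : IsProfile (a + bump k + bump l) := by
  refine hk.congr_cofinite (add_bump_eventuallyEq _ l) fun x => ?_
  have h₁ := hk.step x
  have h₂ := hl.step x
  simp only [Pi.add_apply, bump] at h₁ h₂ ⊢
  grind

end IsProfile

/-- The `k` for which a domino can be added on the diagonals `k` and `k + 1`. -/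
def addable (a : ℤ → ℤ) : Set ℤ := {k | IsProfile (a + bump k)}

/-- The `k` for which a domino can be removed from the diagonals `k` and `k + 1`. -/
def removable (a : ℤ → ℤ) : Set ℤ := {k | IsProfile (a - bump k)}

namespace IsProfile

theorem exists_forall_le_neg_and_forall_ge (ha : IsProfile a) :
    ∃ N : ℕ, (∀ k : ℤ, k ≤ -N → a k = 0) ∧ ∀ k : ℤ, N ≤ k → a k = k := by
  obtain ⟨l, hl⟩ := Filter.eventually_atBot.mp ha.eventually_atBot
  obtain ⟨u, hu⟩ := Filter.eventually_atTop.mp ha.eventually_atTop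
  exact ⟨(max (-l) u).toNat, fun k hk => hl k (by omega), fun k hk => hu k (by omega)⟩

theorem second_difference (ha : IsProfile a) (k : ℤ) :
    (a (k + 2) - a k) - (a (k + 1) - a (k - 1)) =
      (if k ∈ addable a then 1 else 0) - (if k ∈ removable a then 1 else 0) := by
  have h₁ := ha.step (k - 1)
  have h₂ := ha.step (k + 1)
  simp only [addable, removable, Set.mem_ofPred_eq, ha.add_bump_iff, ha.sub_bump_iff]
  grind

theorem exists_addable_removable_subset_Ico (ha : IsProfile a) :
    ∃ N : ℕ, (a (N + 1) - a (N - 1) = 2 ∧ a (-N + 1) - a (-N - 1) = 0) ∧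
      addable a ⊆ Set.Ico (-N : ℤ) N ∧ removable a ⊆ Set.Ico (-N : ℤ) N := by
  obtain ⟨N, hbot, htop⟩ := ha.exists_forall_le_neg_and_forall_ge
  have hout : ∀ k : ℤ, k ∉ Set.Ico (-(N + 2 : ℕ) : ℤ) (N + 2 : ℕ) →
      a k - a (k - 1) = a (k + 2) - a (k + 1) := fun k hk => by
    simp only [Set.mem_Ico] at hk
    grind
  refine ⟨N + 2, ⟨by grind, by grind⟩, fun k hk => ?_, fun k hk => ?_⟩ <;> by_contra hk'
  · have := hout k hk'
    have := ha.add_bump_iff.mp hk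
    omega
  · have := hout k hk'
    have := ha.sub_bump_iff.mp hk
    omega

theorem finite_addable (ha : IsProfile a) : (addable a).Finite :=
  let ⟨_, _, hadd, _⟩ := ha.exists_addable_removable_subset_Ico
  (Set.finite_Ico _ _).subset hadd

theorem finite_removable (ha : IsProfile a) : (removable a).Finite :=
  let ⟨_, _, _, hrem⟩ := ha.exists_addable_removable_subset_Ico
  (Set.finite_Ico _ _).subset hrem

theorem ncard_addable (ha : IsProfile a) :
    (addable a).ncard = (removable a).ncard + 2 := by
  obtain ⟨N, ⟨htop, hbot⟩, hadd, hrem⟩ := ha.exists_addable_removable_subset_Ico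
  have card_eq : ∀ S : Set ℤ, S ⊆ Set.Ico (-N : ℤ) N →
      ∑ k ∈ Finset.Ico (-N : ℤ) N, (if k ∈ S then 1 else 0 : ℤ) = S.ncard := fun S hS => by
    have hS' : ((Finset.Ico (-N : ℤ) N).filter (· ∈ S) : Set ℤ) = S := by
      ext k; simpa using fun hk => hS hk
    rw [Finset.sum_boole, ← Set.ncard_coe_finset, hS']
  have hsum := Finset.sum_Ico_int_sub N fun k => a (k - 1) - a (k + 1)
  suffices ((addable a).ncard : ℤ) - (removable a).ncard = 2 by omega
  rw [← card_eq _ hadd, ← card_eq _ hrem, ← Finset.sum_sub_distrib]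
  calc _ = ∑ k ∈ Finset.Ico (-N : ℤ) N,
        ((a (k - 1) - a (k + 1)) - (a (k + 1 - 1) - a (k + 1 + 1))) :=
        Finset.sum_congr rfl fun k _ => by
          rw [← ha.second_difference, add_sub_cancel_right, add_assoc, one_add_one_eq_two]
          ring
    _ = 2 := by rw [hsum]; linarith

end IsProfile

/-- The profile of `μ`: the column of the first cell of content `k` outside `μ`. Diagonal `k` starts
in column `max k 0`, and its cells in `μ` are consecutive. -/
def profile (μ : YoungDiagram) (k : ℤ) : ℤ :=
  (μ.cells.filter (content · = k)).card + max k 0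

theorem min_add_one_le_card_diagonal {μ : YoungDiagram} {i j : ℕ} (h : (i, j) ∈ μ) :
    min i j + 1 ≤ (μ.cells.filter (content · = content (i, j))).card := by
  rw [← Finset.card_range (min i j + 1)]
  refine Finset.card_le_card_of_injOn (fun m => (m + (i - j), m + (j - i))) (fun m hm => ?_)
    fun m _ m' _ h => by grind
  have hm := Finset.mem_range.mp hm
  refine Finset.mem_filter.mpr ⟨μ.up_left_mem (by omega) (by omega) h, ?_⟩
  simp only [content]
  omega

theorem card_diagonal_le_min {μ : YoungDiagram} {i j : ℕ} (h : (i, j) ∉ μ) :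
    (μ.cells.filter (content · = content (i, j))).card ≤ min i j := by
  rw [← Finset.card_range (min i j)]
  refine Finset.card_le_card_of_injOn (fun c => c.1 - (i - j)) (fun c hc => ?_)
    fun c hc d hd hcd => ?_
  · obtain ⟨hcμ, hc⟩ := Finset.mem_filter.mp hc
    have : ¬ (i ≤ c.1 ∧ j ≤ c.2) := fun hij => h (μ.up_left_mem hij.1 hij.2 hcμ)
    simp only [content] at hc
    exact Finset.mem_range.mpr (show c.1 - (i - j) < min i j by omega)
  · have hc := (Finset.mem_filter.mp hc).2
    have hd := (Finset.mem_filter.mp hd).2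
    simp only [content] at hc hd hcd
    ext <;> omega

theorem mem_iff_lt_profile {μ : YoungDiagram} {c : ℕ × ℕ} :
    c ∈ μ ↔ (c.2 : ℤ) < profile μ (content c) := by
  obtain ⟨i, j⟩ := c
  have hmax : max (content (i, j)) 0 = j - min i j := by simp only [content]; omega
  rw [profile, hmax]
  constructor
  · intro h
    have := min_add_one_le_card_diagonal h
    omega
  · contrapose!
    intro h
    have := card_diagonal_le_min h
    omega

theorem isProfile_profile (μ : YoungDiagram) : IsProfile (profile μ) := by
  have hle : ∀ k, 0 ≤ profile μ k ∧ k ≤ profile μ k := fun k => by unfold profile; omega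
  have hmem : ∀ i j k : ℤ, 0 ≤ i → 0 ≤ j → j - i = k →
      ((i.toNat, j.toNat) ∈ μ ↔ j < profile μ k) := by
    rintro i j k hi hj rfl
    simp only [mem_iff_lt_profile, content, Int.toNat_of_nonneg hi, Int.toNat_of_nonneg hj]
  refine ⟨fun k => ?_, ?_⟩
  · obtain ⟨h₁, h₂⟩ := hle k
    obtain ⟨h₃, h₄⟩ := hle (k + 1)
    have lower : profile μ k ≤ profile μ (k + 1) := by
      by_contra! h
      set j := profile μ (k + 1)
      have h₅ := (hmem (j - k) j k (by omega) h₃ (by omega)).mpr h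
      have h₆ := (hmem (j - (k + 1)) j (k + 1) (by omega) h₃ (by omega)).mp
        (μ.up_left_mem (by omega) le_rfl h₅)
      omega
    have upper : profile μ (k + 1) ≤ profile μ k + 1 := by
      by_contra! h
      set j := profile μ k
      have h₅ := (hmem (j - k) (j + 1) (k + 1) (by omega) (by omega) (by omega)).mpr h
      have h₆ := (hmem (j - k) j k (by omega) h₁ (by omega)).mp
        (μ.up_left_mem le_rfl (by omega) h₅)
      omega
    omega
  · have hfar : ∀ᶠ k in cofinite, ∀ c ∈ μ.cells, content c ≠ k :=
      (eventually_all_finset _).mpr fun c _ =>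
        (eventually_cofinite_ne (content c)).mono fun _ => Ne.symm
    filter_upwards [hfar] with k hk
    rw [profile, Finset.filter_false_of_mem hk]
    simp

theorem profile_injective : Function.Injective profile := by
  intro μ ν h
  ext c
  rw [YoungDiagram.mem_cells, YoungDiagram.mem_cells, mem_iff_lt_profile, mem_iff_lt_profile, h]

theorem IsProfile.isLowerSet_setOf_lt (ha : IsProfile a) :
    IsLowerSet {c : ℕ × ℕ | (c.2 : ℤ) < a (content c)} := by
  rintro ⟨i, j⟩ ⟨i', j'⟩ ⟨hi, hj⟩ h
  simp only [Set.mem_ofPred_eq, content] at h hi hj ⊢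
  have h₁ := ha.monotone_id_sub (show (j' - i : ℤ) ≤ j - i by omega)
  have h₂ := ha.monotone (show (j' - i : ℤ) ≤ j' - i' by omega)
  grind

theorem IsProfile.finite_setOf_lt (ha : IsProfile a) :
    {c : ℕ × ℕ | (c.2 : ℤ) < a (content c)}.Finite := by
  obtain ⟨N, hbot, htop⟩ := ha.exists_forall_le_neg_and_forall_ge
  refine ((Set.finite_Iio (2 * N)).prod (Set.finite_Iio N)).subset ?_
  rintro ⟨i, j⟩ h
  simp only [Set.mem_ofPred_eq, content, Set.mem_prod, Set.mem_Iio] at h ⊢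
  by_cases h₁ : (j - i : ℤ) ≤ -N
  · grind
  by_cases h₂ : N ≤ (j - i : ℤ)
  · grind
  have h₃ := ha.monotone (not_le.mp h₂).le
  have h₄ := htop N le_rfl
  omega

theorem IsProfile.exists_profile_eq (ha : IsProfile a) : ∃ μ, profile μ = a := by
  let μ : YoungDiagram := ⟨ha.finite_setOf_lt.toFinset, by simpa using ha.isLowerSet_setOf_lt⟩
  refine ⟨μ, (isProfile_profile μ).ext_of_forall_lt_iff ha fun c => ?_⟩
  rw [← mem_iff_lt_profile, ← YoungDiagram.mem_cells]
  simp [μ]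

end Profile

/-! ### Adding a domino -/

/-- `ν` is obtained from `κ` by adding one domino. -/
def DominoCover (κ ν : YoungDiagram) : Prop :=
  ∃ a b, dominoAdj a b ∧ a ∉ κ ∧ b ∉ κ ∧ ν.cells = insert a (insert b κ.cells)

theorem profile_eq_add_bump {κ ν : YoungDiagram} {a b : ℕ × ℕ}
    (hab : content b = content a + 1) (ha : a ∉ κ) (hb : b ∉ κ)
    (hν : ν.cells = insert a (insert b κ.cells)) : profile ν = profile κ + bump (content a) := by
  rw [← YoungDiagram.mem_cells] at ha hb
  funext k
  simp only [profile, hν, Finset.filter_insert, bump, Pi.add_apply, hab]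
  split_ifs <;> grind [Finset.card_insert_of_notMem]

/-- The first cell of content `k` outside `μ`. -/
def boundaryCell (μ : YoungDiagram) (k : ℤ) : ℕ × ℕ :=
  ((profile μ k - k).toNat, (profile μ k).toNat)

theorem eq_boundaryCell_iff {μ : YoungDiagram} {k : ℤ} {c : ℕ × ℕ} :
    c = boundaryCell μ k ↔ content c = k ∧ c.2 = profile μ k := by
  have h₁ := (isProfile_profile μ).nonneg k
  have h₂ := (isProfile_profile μ).le_apply k
  simp only [boundaryCell, content, Prod.ext_iff]
  omega

theorem boundaryCell_notMem (μ : YoungDiagram) (k : ℤ) : boundaryCell μ k ∉ μ := by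
  obtain ⟨hk, hp⟩ := eq_boundaryCell_iff.mp (Eq.refl (boundaryCell μ k))
  rw [mem_iff_lt_profile, hk, hp]
  exact lt_irrefl _

theorem dominoAdj_boundaryCell (μ : YoungDiagram) (k : ℤ) :
    dominoAdj (boundaryCell μ k) (boundaryCell μ (k + 1)) := by
  obtain ⟨h₁, h₂⟩ := eq_boundaryCell_iff.mp (Eq.refl (boundaryCell μ k))
  obtain ⟨h₃, h₄⟩ := eq_boundaryCell_iff.mp (Eq.refl (boundaryCell μ (k + 1)))
  have step := (isProfile_profile μ).step k
  simp only [content] at h₁ h₃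
  unfold dominoAdj
  omega

theorem dominoCover_iff {κ ν : YoungDiagram} :
    DominoCover κ ν ↔ ∃ k, profile ν = profile κ + bump k := by
  constructor
  · rintro ⟨a, b, hab, ha, hb, hν⟩
    have : content b = content a + 1 ∨ content a = content b + 1 := by
      unfold content; unfold dominoAdj at hab; omega
    obtain h | h := this
    · exact ⟨_, profile_eq_add_bump h ha hb hν⟩
    · exact ⟨_, profile_eq_add_bump h hb ha (by rw [hν, Finset.insert_comm])⟩
  · rintro ⟨k, hk⟩
    refine ⟨boundaryCell κ k, boundaryCell κ (k + 1), dominoAdj_boundaryCell κ k,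
      boundaryCell_notMem κ k, boundaryCell_notMem κ (k + 1), ?_⟩
    ext c
    simp only [Finset.mem_insert, YoungDiagram.mem_cells, mem_iff_lt_profile, hk, bump,
      Pi.add_apply, eq_boundaryCell_iff]
    split_ifs <;> grind

theorem not_dominoCover_bot (κ : YoungDiagram) : ¬ DominoCover κ ⊥ := by
  rintro ⟨a, b, -, -, -, h⟩
  exact Finset.insert_ne_empty _ _ h.symm

/-! ### Differential posets -/

section Differential

universe u v

variable {V : Type u}

/-- The local axioms on the covering relation of an `r`-differential poset in the sense of Stanley,
`R x y` meaning that `y` covers `x`. The counting conditions are stated as bijections, so that no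
finiteness is needed. -/
structure IsDifferential (R : V → V → Prop) (r : ℕ) : Prop where
  self (x : V) : Nonempty ({z // R x z} ≃ {z // R z x} ⊕ Fin r)
  ne {x y : V} : x ≠ y → Nonempty ({z // R x z ∧ R y z} ≃ {z // R z x ∧ R z y})

variable {R : V → V → Prop} {r : ℕ} {root : V}

theorem IsDifferential.local_rule (hR : IsDifferential R r) (x y : V) :
    Nonempty ({z // R x z ∧ R y z} ≃ {z // R z x ∧ R z y} ⊕ {_i : Fin r // x = y}) := by
  by_cases hxy : x = y
  · subst hxy
    simpa only [and_self] using (hR.self x).map fun e =>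
      e.trans (Equiv.sumCongr (Equiv.refl _) (Equiv.subtypeUnivEquiv fun _ => Eq.refl x).symm)
  · have : IsEmpty {_i : Fin r // x = y} := ⟨fun i => hxy i.2⟩
    exact (hR.ne hxy).map fun e => e.trans (Equiv.sumEmpty _ _).symm

/-- Stanley's commutation relation `DU = UD + r`, for the up and down operators applied to a family
of types `T` in place of a weight function. -/
def IsDifferential.upDownEquiv (hR : IsDifferential R r) (T : V → Type v) (x : V) :
    (Σ y : {y // R x y}, Σ z : {z // R z y}, T z) ≃
      (Σ y : {y // R y x}, Σ z : {z // R y z}, T z) ⊕ Fin r × T x :=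
  calc (Σ y : {y // R x y}, Σ z : {z // R z y}, T z)
    _ ≃ Σ z, {y // R x y ∧ R z y} × T z :=
      ⟨fun ⟨y, z, t⟩ => ⟨z, ⟨y, y.2, z.2⟩, t⟩, fun ⟨z, y, t⟩ => ⟨⟨y, y.2.1⟩, ⟨z, y.2.2⟩, t⟩,
        fun _ => rfl, fun _ => rfl⟩
    _ ≃ Σ z, ({y // R y x ∧ R y z} × T z ⊕ {_i : Fin r // x = z} × T z) :=
      Equiv.sigmaCongrRight fun z =>
        ((hR.local_rule x z).some.prodCongr (Equiv.refl _)).trans (Equiv.sumProdDistrib _ _ _)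
    _ ≃ (Σ z, {y // R y x ∧ R y z} × T z) ⊕ Σ z, {_i : Fin r // x = z} × T z :=
      Equiv.sigmaSumDistrib _ _
    _ ≃ (Σ y : {y // R y x}, Σ z : {z // R y z}, T z) ⊕ Fin r × T x :=
      Equiv.sumCongr
        ⟨fun ⟨z, y, t⟩ => ⟨⟨y, y.2.1⟩, ⟨z, y.2.2⟩, t⟩, fun ⟨y, z, t⟩ => ⟨z, ⟨y, y.2, z.2⟩, t⟩,
          fun _ => rfl, fun _ => rfl⟩
        ⟨fun ⟨_, i, t⟩ => (i, i.2 ▸ t), fun ⟨i, t⟩ => ⟨x, ⟨i, rfl⟩, t⟩,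
          fun ⟨_, ⟨_, rfl⟩, _⟩ => rfl, fun _ => rfl⟩

/-- Saturated chains `root = x₀, x₁, ..., xₙ = x` with `R xᵢ xᵢ₊₁`. -/
def SaturatedChain (R : V → V → Prop) (root : V) : ℕ → V → Type u
  | 0, x => {_u : PUnit.{u + 1} // x = root}
  | n + 1, y => Σ x : {x // R x y}, SaturatedChain R root n x

/-- The relation `D Uⁿ⁺¹ root = r (n + 1) Uⁿ root`, where `Uⁿ root` counts chains of length `n`. -/
def IsDifferential.upChainEquiv (hR : IsDifferential R r) (hroot : ∀ x, ¬ R x root) :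
    ∀ (n : ℕ) (x : V), (Σ y : {y // R x y}, SaturatedChain R root (n + 1) y) ≃
      Fin (r * (n + 1)) × SaturatedChain R root n x
  | 0, x =>
    have : IsEmpty (Σ y : {y // R y x}, Σ z : {z // R y z}, SaturatedChain R root 0 z) :=
      ⟨fun ⟨y, z, p⟩ => hroot y (p.2 ▸ z.2)⟩
    calc (Σ y : {y // R x y}, SaturatedChain R root 1 y)
      _ ≃ (Σ y : {y // R y x}, Σ z : {z // R y z}, SaturatedChain R root 0 z) ⊕
          Fin r × SaturatedChain R root 0 x :=
        hR.upDownEquiv (SaturatedChain R root 0) x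
      _ ≃ Fin r × SaturatedChain R root 0 x := Equiv.emptySum _ _
      _ ≃ Fin (r * (0 + 1)) × SaturatedChain R root 0 x :=
        (finCongr (mul_one r).symm).prodCongr (Equiv.refl _)
  | n + 1, x =>
    calc (Σ y : {y // R x y}, SaturatedChain R root (n + 2) y)
      _ ≃ (Σ y : {y // R y x}, Σ z : {z // R y z}, SaturatedChain R root (n + 1) z) ⊕
          Fin r × SaturatedChain R root (n + 1) x :=
        hR.upDownEquiv (SaturatedChain R root (n + 1)) x
      _ ≃ (Σ y : {y // R y x}, Fin (r * (n + 1)) × SaturatedChain R root n y) ⊕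
          Fin r × SaturatedChain R root (n + 1) x :=
        Equiv.sumCongr (Equiv.sigmaCongrRight fun y => hR.upChainEquiv hroot n y) (Equiv.refl _)
      _ ≃ Fin (r * (n + 1)) × SaturatedChain R root (n + 1) x ⊕
          Fin r × SaturatedChain R root (n + 1) x :=
        Equiv.sumCongr ⟨fun ⟨y, i, p⟩ => (i, ⟨y, p⟩), fun ⟨i, y, p⟩ => ⟨y, i, p⟩,
          fun _ => rfl, fun _ => rfl⟩ (Equiv.refl _)
      _ ≃ (Fin (r * (n + 1)) ⊕ Fin r) × SaturatedChain R root (n + 1) x :=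
        (Equiv.sumProdDistrib _ _ _).symm
      _ ≃ Fin (r * (n + 1 + 1)) × SaturatedChain R root (n + 1) x :=
        finSumFinEquiv.prodCongr (Equiv.refl _)

/-- Moving the last step of the first chain to the end of the second one leaves a chain of
length `n` and a chain of length `n + 2` that ends with a step down. -/
def IsDifferential.chainPairEquiv (hR : IsDifferential R r) (hroot : ∀ x, ¬ R x root) (n : ℕ) :
    (Σ x, SaturatedChain R root (n + 1) x × SaturatedChain R root (n + 1) x) ≃
      Fin (r * (n + 1)) × Σ x, SaturatedChain R root n x × SaturatedChain R root n x :=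
  calc (Σ y, (Σ x : {x // R x y}, SaturatedChain R root n x) × SaturatedChain R root (n + 1) y)
    _ ≃ Σ x, SaturatedChain R root n x × Σ y : {y // R x y}, SaturatedChain R root (n + 1) y :=
      ⟨fun ⟨y, ⟨x, p⟩, q⟩ => ⟨x, p, ⟨y, x.2⟩, q⟩, fun ⟨x, p, y, q⟩ => ⟨y, ⟨⟨x, y.2⟩, p⟩, q⟩,
        fun _ => rfl, fun _ => rfl⟩
    _ ≃ Σ x, SaturatedChain R root n x × (Fin (r * (n + 1)) × SaturatedChain R root n x) :=
      Equiv.sigmaCongrRight fun x => (Equiv.refl _).prodCongr (hR.upChainEquiv hroot n x)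
    _ ≃ Fin (r * (n + 1)) × Σ x, SaturatedChain R root n x × SaturatedChain R root n x :=
      ⟨fun ⟨x, p, i, q⟩ => (i, ⟨x, p, q⟩), fun ⟨i, x, p, q⟩ => ⟨x, p, i, q⟩,
        fun _ => rfl, fun _ => rfl⟩

open Nat in
theorem IsDifferential.card_saturatedChain_pairs (hR : IsDifferential R r) (hroot : ∀ x, ¬ R x root)
    (n : ℕ) :
    Nat.card (Σ x, SaturatedChain R root n x × SaturatedChain R root n x) = r ^ n * n ! := by
  induction n with
  | zero =>
    have : Unique (Σ x, SaturatedChain R root 0 x × SaturatedChain R root 0 x) :=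
      ⟨⟨root, ⟨⟨⟩, rfl⟩, ⟨⟨⟩, rfl⟩⟩, fun ⟨_, ⟨_, rfl⟩, _⟩ => rfl⟩
    simp
  | succ n ih =>
    rw [Nat.card_congr (hR.chainPairEquiv hroot n), Nat.card_prod, Nat.card_fin, ih,
      Nat.factorial_succ]
    ring

end Differential

/-! ### Young diagrams under adding dominoes -/

/-- The diagrams with a profile in the injective family `g` correspond to the profiles in `g`. -/
def profileFiberEquiv {g : ℤ → ℤ → ℤ} (hg : Function.Injective g) :
    {μ // ∃ k, profile μ = g k} ≃ {k // IsProfile (g k)} :=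
  Equiv.ofBijective (fun μ => ⟨μ.2.choose, μ.2.choose_spec ▸ isProfile_profile μ⟩) <| by
    constructor
    · intro μ ν h
      refine Subtype.ext (profile_injective ?_)
      exact μ.2.choose_spec.trans <|
        (congrArg g (Subtype.ext_iff.mp h)).trans ν.2.choose_spec.symm
    · rintro ⟨k, hk⟩
      obtain ⟨μ, hμ⟩ := hk.exists_profile_eq
      have h : ∃ l, profile μ = g l := ⟨k, hμ⟩
      exact ⟨⟨μ, h⟩, Subtype.ext (hg (h.choose_spec.symm.trans hμ))⟩

theorem nonempty_equiv_covers (μ : YoungDiagram) :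
    Nonempty ({ν // DominoCover μ ν} ≃ {κ // DominoCover κ μ} ⊕ Fin 2) := by
  have hμ := isProfile_profile μ
  have := hμ.finite_addable.to_subtype
  have := hμ.finite_removable.to_subtype
  have up : {ν // DominoCover μ ν} ≃ addable (profile μ) :=
    (Equiv.subtypeEquivRight fun ν => dominoCover_iff).trans <|
      profileFiberEquiv ((add_right_injective _).comp bump_injective)
  have down : {κ // DominoCover κ μ} ≃ removable (profile μ) :=
    (Equiv.subtypeEquivRight fun κ => dominoCover_iff.trans <| exists_congr fun k =>
      eq_comm.trans eq_sub_iff_add_eq.symm).trans <|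
      profileFiberEquiv ((sub_right_injective (b := profile μ)).comp bump_injective)
  have : Nonempty (addable (profile μ) ≃ removable (profile μ) ⊕ Fin 2) := by
    refine Finite.card_eq.mp ?_
    rw [Nat.card_sum, Nat.card_fin]
    exact hμ.ncard_addable
  exact this.map fun e => up.trans (e.trans (down.symm.sumCongr (Equiv.refl _)))

theorem exists_opposite_below {x y z : YoungDiagram} (hxy : x ≠ y) (hx : DominoCover x z)
    (hy : DominoCover y z) :
    ∃ w, profile w + profile z = profile x + profile y ∧ DominoCover w x ∧ DominoCover w y := by
  obtain ⟨k, hk⟩ := dominoCover_iff.mp hx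
  obtain ⟨l, hl⟩ := dominoCover_iff.mp hy
  have hkl : k ≠ l := by
    rintro rfl
    exact hxy (profile_injective (add_right_cancel (hk.symm.trans hl)))
  have ex : profile x - bump l + bump l = profile x := sub_add_cancel _ _
  have ey : profile x - bump l + bump k = profile y := by
    rw [sub_add_eq_add_sub, ← hk, hl, add_sub_cancel_right]
  have hw : IsProfile (profile x - bump l) :=
    .of_add_bump_of_add_bump hkl (ey.symm ▸ isProfile_profile y) (ex.symm ▸ isProfile_profile x)
  obtain ⟨w, ew⟩ := hw.exists_profile_eq
  refine ⟨w, ?_, dominoCover_iff.mpr ⟨l, ?_⟩, dominoCover_iff.mpr ⟨k, ?_⟩⟩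
  · rw [ew, hl, ← ey]; abel
  · rw [ew, ex]
  · rw [ew, ey]

theorem exists_opposite_above {x y z : YoungDiagram} (hxy : x ≠ y) (hx : DominoCover z x)
    (hy : DominoCover z y) :
    ∃ w, profile w + profile z = profile x + profile y ∧ DominoCover x w ∧ DominoCover y w := by
  obtain ⟨k, hk⟩ := dominoCover_iff.mp hx
  obtain ⟨l, hl⟩ := dominoCover_iff.mp hy
  have hkl : k ≠ l := by
    rintro rfl
    exact hxy (profile_injective (hk.trans hl.symm))
  have hw : IsProfile (profile z + bump k + bump l) :=
    .add_bump_add_bump hkl (hk ▸ isProfile_profile x) (hl ▸ isProfile_profile y)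
  obtain ⟨w, ew⟩ := hw.exists_profile_eq
  refine ⟨w, ?_, dominoCover_iff.mpr ⟨l, ?_⟩, dominoCover_iff.mpr ⟨k, ?_⟩⟩
  · rw [ew, hk, hl]; abel
  · rw [ew, hk]
  · rw [ew, hl]; abel

theorem isDifferential_dominoCover : IsDifferential DominoCover 2 where
  self := nonempty_equiv_covers
  ne {x y} hxy := by
    choose f hf hfxy using fun z : {z // DominoCover x z ∧ DominoCover y z} =>
      exists_opposite_below hxy z.2.1 z.2.2
    choose g hg hgxy using fun z : {z // DominoCover z x ∧ DominoCover z y} =>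
      exists_opposite_above hxy z.2.1 z.2.2
    exact ⟨fun z => ⟨f z, hfxy z⟩, fun z => ⟨g z, hgxy z⟩,
      fun z => Subtype.ext <| profile_injective <| add_left_cancel <|
        ((add_comm _ _).trans (hg ⟨f z, hfxy z⟩)).trans (hf z).symm,
      fun z => Subtype.ext <| profile_injective <| add_left_cancel <|
        ((add_comm _ _).trans (hf ⟨g z, hgxy z⟩)).trans (hg z).symm⟩

/-! ### Standard domino tableaux as chains -/

theorem dominoAdj.symm {a b : ℕ × ℕ} (h : dominoAdj a b) : dominoAdj b a := by
  unfold dominoAdj at *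
  omega

theorem dominoAdj.ne {a b : ℕ × ℕ} (h : dominoAdj a b) : a ≠ b := by
  rintro rfl
  unfold dominoAdj at h
  omega

/-- `lab` is the labelling of a standard domino tableau of shape `μ` with `n` dominoes. The tiling
is not recorded, being determined by the labels, and the conditions on rows and columns are replaced
by the requirement that the cells labelled `1, ..., k` form a diagram for every `k`. -/
structure IsDominoLabelling (μ : YoungDiagram) (n : ℕ) (lab : ℕ × ℕ → ℕ) : Prop where
  mem_iff (c : ℕ × ℕ) : c ∈ μ ↔ lab c ≠ 0
  le (c : ℕ × ℕ) : lab c ≤ n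
  isLowerSet (k : ℕ) : IsLowerSet {c | lab c ≠ 0 ∧ lab c ≤ k}
  exists_domino (k : ℕ) : 1 ≤ k → k ≤ n →
    ∃ a b, dominoAdj a b ∧ ∀ c, lab c = k ↔ c = a ∨ c = b

theorem isLowerSet_of_forall_succ {S : Set (ℕ × ℕ)} (hrow : ∀ i j, (i, j + 1) ∈ S → (i, j) ∈ S)
    (hcol : ∀ i j, (i + 1, j) ∈ S → (i, j) ∈ S) : IsLowerSet S := by
  suffices Antitone (· ∈ S) from fun a b hba ha => this hba ha
  refine (antitone_iff_forall_covBy _).mpr ?_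
  rintro ⟨i, j⟩ ⟨i', j'⟩ h
  obtain ⟨hi, rfl⟩ | ⟨hj, rfl⟩ := Prod.mk_covBy_mk_iff.mp h
  · exact Order.covBy_iff_add_one_eq.mp hi ▸ hcol i j
  · exact Order.covBy_iff_add_one_eq.mp hj ▸ hrow i j

section SDT

variable {μ : YoungDiagram} {n : ℕ} {tile : ℕ × ℕ → ℕ × ℕ} {lab : ℕ × ℕ → ℕ}

theorem IsSDT.mem_iff (h : IsSDT μ n tile lab) (c : ℕ × ℕ) : c ∈ μ ↔ lab c ≠ 0 := by
  rw [← YoungDiagram.mem_cells]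
  refine ⟨fun hc => Nat.one_le_iff_ne_zero.mp (h.2.1 c hc).1, fun hc => ?_⟩
  by_contra hμ
  exact hc (h.1.2.2.1 c hμ)

theorem IsSDT.lab_eq_iff (h : IsSDT μ n tile lab) {c : ℕ × ℕ} (hc : c ∈ μ.cells) (d : ℕ × ℕ) :
    lab d = lab c ↔ d = c ∨ d = tile c := by
  obtain ⟨⟨htile, -⟩, hlab, -⟩ := h.1
  obtain ⟨hct, -, hadj⟩ := htile c hc
  have hfilter : {c, tile c} = μ.cells.filter fun d => lab d = lab c := by
    refine Finset.eq_of_subset_of_card_le (fun d hd => ?_) ?_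
    · obtain rfl | rfl : d = c ∨ d = tile c := by simpa using hd
      · exact Finset.mem_filter.mpr ⟨hc, rfl⟩
      · exact Finset.mem_filter.mpr ⟨hct, hlab c hc⟩
    · rw [h.2.2 _ (h.2.1 c hc).1 (h.2.1 c hc).2, Finset.card_pair hadj.ne]
  have hd : lab d = lab c → d ∈ μ := fun e =>
    (h.mem_iff d).mpr (e ▸ (h.mem_iff c).mp hc)
  simpa [and_iff_right_of_imp hd] using (Finset.ext_iff.mp hfilter d).symm

theorem IsSDT.isDominoLabelling (h : IsSDT μ n tile lab) : IsDominoLabelling μ n lab where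
  mem_iff := h.mem_iff
  le c := by
    by_cases hc : c ∈ μ.cells
    · exact (h.2.1 c hc).2
    · exact (h.1.2.2.1 c hc).trans_le n.zero_le
  isLowerSet k := by
    obtain ⟨-, hlab, -, hrow, hcol⟩ := h.1
    refine isLowerSet_of_forall_succ (fun i j ⟨h₀, hk⟩ => ?_) fun i j ⟨h₀, hk⟩ => ?_
    · have hc := (h.mem_iff _).mpr h₀
      have hc' := μ.up_left_mem le_rfl j.le_succ hc
      exact ⟨(h.mem_iff _).mp hc', (hrow i j hc' hc).trans hk⟩
    · have hc := (h.mem_iff _).mpr h₀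
      have hc' := μ.up_left_mem i.le_succ le_rfl hc
      refine ⟨(h.mem_iff _).mp hc', le_trans ?_ hk⟩
      by_cases htile : tile (i, j) = (i + 1, j)
      · exact (htile ▸ hlab _ hc').ge
      · exact (hcol i j hc' hc htile).le
  exists_domino k hk hkn := by
    obtain ⟨c, hck⟩ := Finset.card_pos.mp ((h.2.2 k hk hkn).symm ▸ two_pos)
    obtain ⟨hc, rfl⟩ := Finset.mem_filter.mp hck
    exact ⟨c, tile c, (h.1.1.1 c hc).2.2, h.lab_eq_iff hc⟩

theorem IsSDT.tile_eq {tile' : ℕ × ℕ → ℕ × ℕ} (h : IsSDT μ n tile lab)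
    (h' : IsSDT μ n tile' lab) : tile = tile' := by
  funext c
  by_cases hc : c ∈ μ.cells
  · have := (h'.lab_eq_iff hc _).mp (h.1.2.1 c hc)
    exact this.resolve_left (h.1.1.1 c hc).2.2.ne.symm
  · rw [h.1.1.2 c hc, h'.1.1.2 c hc]

namespace IsDominoLabelling

theorem exists_partner (h : IsDominoLabelling μ n lab) {c : ℕ × ℕ} (hc : c ∈ μ) :
    ∃ d, dominoAdj c d ∧ ∀ e, lab e = lab c ↔ e = c ∨ e = d := by
  have h₀ := (h.mem_iff c).mp hc
  obtain ⟨a, b, hab, hlab⟩ := h.exists_domino (lab c) (by omega) (h.le c)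
  obtain rfl | rfl := (hlab c).mp rfl
  · exact ⟨b, hab, hlab⟩
  · exact ⟨a, hab.symm, fun e => (hlab e).trans or_comm⟩

theorem lab_le_lab (h : IsDominoLabelling μ n lab) {c d : ℕ × ℕ} (hcd : c ≤ d) (hd : d ∈ μ) :
    lab c ≤ lab d :=
  (h.isLowerSet (lab d) hcd ⟨(h.mem_iff d).mp hd, le_rfl⟩).2

theorem card_filter_eq (h : IsDominoLabelling μ n lab) {k : ℕ} (hk : 1 ≤ k) (hkn : k ≤ n) :
    (μ.cells.filter fun c => lab c = k).card = 2 := by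
  obtain ⟨a, b, hab, hlab⟩ := h.exists_domino k hk hkn
  rw [← Finset.card_pair hab.ne]
  congr 1
  ext c
  have := h.mem_iff c
  rw [Finset.mem_filter, YoungDiagram.mem_cells, this, hlab, Finset.mem_insert,
    Finset.mem_singleton, and_iff_right_iff_imp, ← hlab]
  omega

theorem exists_isDominoTiling (h : IsDominoLabelling μ n lab) :
    ∃ tile, IsDominoTiling μ tile ∧ ∀ c ∈ μ, ∀ d, lab d = lab c ↔ d = c ∨ d = tile c := by
  have : ∀ c, ∃ d, (c ∈ μ → dominoAdj c d ∧ ∀ e, lab e = lab c ↔ e = c ∨ e = d) ∧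
      (c ∉ μ → d = c) := fun c => by
    by_cases hc : c ∈ μ
    · exact (h.exists_partner hc).imp fun d hd => ⟨fun _ => hd, absurd hc⟩
    · exact ⟨c, fun hc' => absurd hc' hc, fun _ => rfl⟩
  choose tile hin hout using this
  refine ⟨tile, ⟨fun c hc => ?_, hout⟩, fun c hc => (hin c hc).2⟩
  obtain ⟨hadj, hlab⟩ := hin c hc
  have htile : lab (tile c) = lab c := (hlab _).mpr (.inr rfl)
  have hmem : tile c ∈ μ := (h.mem_iff _).mpr (htile ▸ (h.mem_iff c).mp hc)
  have := ((hin _ hmem).2 c).mp htile.symm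
  exact ⟨hmem, (this.resolve_left hadj.ne).symm, hadj⟩

theorem exists_isSDT (h : IsDominoLabelling μ n lab) : ∃ tile, IsSDT μ n tile lab := by
  obtain ⟨tile, htile, hlab⟩ := h.exists_isDominoTiling
  refine ⟨tile, ⟨htile, fun c hc => (hlab c hc _).mpr (.inr rfl), fun c hc => ?_,
    fun i j _ hc => h.lab_le_lab (Prod.mk_le_mk.mpr ⟨le_rfl, j.le_succ⟩) hc,
    fun i j hc hc' hne => ?_⟩,
    fun c hc => ⟨Nat.one_le_iff_ne_zero.mpr ((h.mem_iff c).mp hc), h.le c⟩,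
    fun k => h.card_filter_eq⟩
  · exact of_not_not ((h.mem_iff c).not.mp hc)
  · refine (h.lab_le_lab (Prod.mk_le_mk.mpr ⟨i.le_succ, le_rfl⟩) hc').lt_of_ne fun e => ?_
    obtain hc' | hc' := (hlab _ hc _).mp e.symm
    · simp at hc'
    · exact hne hc'.symm

end IsDominoLabelling

/-- Forgetting the tiling of a standard domino tableau. -/
def sdtEquiv (μ : YoungDiagram) (n : ℕ) : SDT μ n ≃ {lab // IsDominoLabelling μ n lab} :=
  Equiv.ofBijective (fun x => ⟨x.1.2, x.2.isDominoLabelling⟩)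
    ⟨fun x y h => by
      have hlab : x.1.2 = y.1.2 := congrArg Subtype.val h
      exact Subtype.ext (Prod.ext (x.2.tile_eq (hlab ▸ y.2)) hlab),
    fun ⟨lab, h⟩ => h.exists_isSDT.elim fun tile ht => ⟨⟨(tile, lab), ht⟩, rfl⟩⟩

theorem IsSDT.card_cells (h : IsSDT μ n tile lab) : μ.cells.card = 2 * n := by
  have hmem : ∀ c ∈ μ.cells, lab c ∈ Finset.Icc 1 n := fun c hc => Finset.mem_Icc.mpr (h.2.1 c hc)
  rw [Finset.card_eq_sum_card_fiberwise hmem, Finset.sum_const_nat fun k hk =>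
    h.2.2 k (Finset.mem_Icc.mp hk).1 (Finset.mem_Icc.mp hk).2, Nat.card_Icc]
  omega

end SDT

section Branching

variable {κ ν : YoungDiagram} {n : ℕ} {lab : ℕ × ℕ → ℕ}

/-- Erases the labels greater than `n`. -/
def truncateLabelling (n : ℕ) (lab : ℕ × ℕ → ℕ) (c : ℕ × ℕ) : ℕ :=
  if lab c ≤ n then lab c else 0

/-- Labels the cells of `ν` outside `κ` by `n + 1`, keeping `lab` on `κ`. -/
def extendLabelling (κ ν : YoungDiagram) (n : ℕ) (lab : ℕ × ℕ → ℕ) (c : ℕ × ℕ) : ℕ :=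
  if c ∈ κ then lab c else if c ∈ ν then n + 1 else 0

namespace IsDominoLabelling

/-- The diagram left after removing the domino labelled `n + 1`. -/
def lowerDiagram (h : IsDominoLabelling ν (n + 1) lab) : YoungDiagram where
  cells := ν.cells.filter (lab · ≤ n)
  isLowerSet c d hdc hc := by
    simp only [Finset.coe_filter, Set.mem_ofPred_eq, YoungDiagram.mem_cells, h.mem_iff] at hc ⊢
    exact h.isLowerSet n hdc hc

theorem mem_lowerDiagram (h : IsDominoLabelling ν (n + 1) lab) {c : ℕ × ℕ} :
    c ∈ h.lowerDiagram ↔ lab c ≠ 0 ∧ lab c ≤ n := by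
  rw [← YoungDiagram.mem_cells, lowerDiagram, Finset.mem_filter, YoungDiagram.mem_cells, h.mem_iff]

theorem dominoCover_lowerDiagram (h : IsDominoLabelling ν (n + 1) lab) :
    DominoCover h.lowerDiagram ν := by
  obtain ⟨a, b, hab, hlab⟩ := h.exists_domino (n + 1) (by omega) le_rfl
  refine ⟨a, b, hab, ?_, ?_, ?_⟩
  · rw [h.mem_lowerDiagram, (hlab a).mpr (.inl rfl)]
    omega
  · rw [h.mem_lowerDiagram, (hlab b).mpr (.inr rfl)]
    omega
  · ext c
    have := h.le c
    rw [Finset.mem_insert, Finset.mem_insert, ← or_assoc, ← hlab, YoungDiagram.mem_cells,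
      YoungDiagram.mem_cells, h.mem_iff, h.mem_lowerDiagram]
    omega

theorem isDominoLabelling_truncateLabelling (h : IsDominoLabelling ν (n + 1) lab) :
    IsDominoLabelling h.lowerDiagram n (truncateLabelling n lab) where
  mem_iff c := by rw [h.mem_lowerDiagram]; grind [truncateLabelling]
  le c := by grind [truncateLabelling]
  isLowerSet k := by
    convert h.isLowerSet (min k n) using 1
    ext c
    simp only [Set.mem_ofPred_eq, truncateLabelling]
    split_ifs <;> omega
  exists_domino k hk hkn := by
    obtain ⟨a, b, hab, hlab⟩ := h.exists_domino k hk (by omega)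
    refine ⟨a, b, hab, fun c => ?_⟩
    rw [← hlab]
    grind [truncateLabelling]

theorem isDominoLabelling_extendLabelling (h : IsDominoLabelling κ n lab) (hκν : DominoCover κ ν) :
    IsDominoLabelling ν (n + 1) (extendLabelling κ ν n lab) := by
  obtain ⟨a, b, hab, ha, hb, hcells⟩ := hκν
  have hν : ∀ c, c ∈ ν ↔ c = a ∨ c = b ∨ c ∈ κ := fun c => by
    rw [← YoungDiagram.mem_cells, hcells, Finset.mem_insert, Finset.mem_insert,
      YoungDiagram.mem_cells]
  have hmem := h.mem_iff
  have hle := h.le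
  refine ⟨fun c => by grind [extendLabelling], fun c => by grind [extendLabelling], fun k => ?_,
    fun k hk hkn => ?_⟩
  · obtain hk | hk := le_or_gt k n
    · convert h.isLowerSet k using 1
      ext c
      simp only [Set.mem_ofPred_eq]
      grind [extendLabelling]
    · convert ν.isLowerSet using 1
      ext c
      grind [extendLabelling, YoungDiagram.mem_cells]
  · obtain hk' | rfl := Nat.le_succ_iff.mp hkn
    · obtain ⟨a', b', hab', hlab⟩ := h.exists_domino k hk hk'
      exact ⟨a', b', hab', fun c => by grind [extendLabelling]⟩
    · exact ⟨a, b, hab, fun c => by grind [extendLabelling]⟩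

theorem extendLabelling_truncateLabelling (h : IsDominoLabelling ν (n + 1) lab) :
    extendLabelling h.lowerDiagram ν n (truncateLabelling n lab) = lab := by
  funext c
  have := h.le c
  simp only [extendLabelling, truncateLabelling, h.mem_lowerDiagram, h.mem_iff]
  grind

theorem truncateLabelling_extendLabelling (h : IsDominoLabelling κ n lab) :
    truncateLabelling n (extendLabelling κ ν n lab) = lab := by
  funext c
  have := h.le c
  have := h.mem_iff c
  grind [truncateLabelling, extendLabelling]

theorem lowerDiagram_extendLabelling (h : IsDominoLabelling κ n lab) (hκν : DominoCover κ ν) :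
    (h.isDominoLabelling_extendLabelling hκν).lowerDiagram = κ := by
  ext c
  have := h.le c
  have := h.mem_iff c
  rw [YoungDiagram.mem_cells, YoungDiagram.mem_cells, mem_lowerDiagram]
  grind [extendLabelling]

end IsDominoLabelling

/-- Removing the domino with the largest label. -/
def branchingEquiv (ν : YoungDiagram) (n : ℕ) :
    {lab // IsDominoLabelling ν (n + 1) lab} ≃
      Σ κ : {κ // DominoCover κ ν}, {lab // IsDominoLabelling κ n lab} where
  toFun x := ⟨⟨x.2.lowerDiagram, x.2.dominoCover_lowerDiagram⟩,
    truncateLabelling n x.1, x.2.isDominoLabelling_truncateLabelling⟩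
  invFun y := ⟨extendLabelling y.1 ν n y.2, y.2.2.isDominoLabelling_extendLabelling y.1.2⟩
  left_inv x := Subtype.ext x.2.extendLabelling_truncateLabelling
  right_inv y := Sigma.subtype_ext (Subtype.ext (y.2.2.lowerDiagram_extendLabelling y.1.2))
    y.2.2.truncateLabelling_extendLabelling

theorem isDominoLabelling_zero_iff {μ : YoungDiagram} :
    IsDominoLabelling μ 0 lab ↔ μ = ⊥ ∧ lab = 0 := by
  constructor
  · intro h
    have hlab : lab = 0 := funext fun c => Nat.le_zero.mp (h.le c)
    exact ⟨by ext c; simp [h.mem_iff, hlab], hlab⟩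
  · rintro ⟨rfl, rfl⟩
    exact ⟨fun c => by simp, fun c => le_rfl, fun k => by simp [IsLowerSet], by omega⟩

/-- A standard domino tableau as the chain of diagrams formed by the labels at most `k`. -/
def labellingEquivSaturatedChain : ∀ (n : ℕ) (μ : YoungDiagram),
    {lab // IsDominoLabelling μ n lab} ≃ SaturatedChain DominoCover ⊥ n μ
  | 0, _ =>
    { toFun x := ⟨⟨⟩, (isDominoLabelling_zero_iff.mp x.2).1⟩
      invFun p := ⟨0, isDominoLabelling_zero_iff.mpr ⟨p.2, rfl⟩⟩
      left_inv x := Subtype.ext (isDominoLabelling_zero_iff.mp x.2).2.symm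
      right_inv _ := rfl }
  | n + 1, μ => (branchingEquiv μ n).trans <|
    Equiv.sigmaCongrRight fun κ => labellingEquivSaturatedChain n κ

end Branching

/-! ### Signed permutations -/

namespace IsSignedPerm

variable {n : ℕ} {f g : Equiv.Perm ℤ}

theorem one (n : ℕ) : IsSignedPerm n 1 := ⟨fun _ => rfl, fun _ _ => rfl⟩

theorem mul (hf : IsSignedPerm n f) (hg : IsSignedPerm n g) : IsSignedPerm n (f * g) :=
  ⟨fun i => by simp [hf.1, hg.1], fun i hi => by simp [hf.2 i hi, hg.2 i hi]⟩

theorem inv (hf : IsSignedPerm n f) : IsSignedPerm n f⁻¹ :=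
  ⟨fun i => by rw [Equiv.Perm.inv_eq_iff_eq, hf.1]; simp,
    fun i hi => by rw [Equiv.Perm.inv_eq_iff_eq, hf.2 i hi]⟩

theorem apply_zero (hf : IsSignedPerm n f) : f 0 = 0 := by
  have := hf.1 0
  rw [neg_zero] at this
  omega

theorem abs_apply_le (hf : IsSignedPerm n f) {i : ℤ} (hi : |i| ≤ n) : |f i| ≤ n := by
  by_contra! h
  have := f.injective (hf.2 _ h)
  rw [this] at h
  omega

theorem succ_iff : IsSignedPerm n f ↔ IsSignedPerm (n + 1) f ∧ f (n + 1) = n + 1 := by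
  constructor
  · rintro ⟨hneg, hfix⟩
    exact ⟨⟨hneg, fun i hi => hfix i (by omega)⟩, hfix _ (by grind)⟩
  · rintro ⟨⟨hneg, hfix⟩, hn⟩
    refine ⟨hneg, fun i hi => ?_⟩
    have := hneg (n + 1)
    grind

end IsSignedPerm

/-- The signed permutation exchanging `a` with `b` and `-a` with `-b`; for `b = -a` it changes the
sign of `a`. -/
def signedSwap (a b : ℤ) (ha : a ≠ 0) (hb : b ≠ 0) : Equiv.Perm ℤ :=
  Function.Involutive.toPerm
    (fun x => if x = a then b else if x = b then a else if x = -a then -b else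
      if x = -b then -a else x)
    fun x => by grind

theorem signedSwap_apply {a b : ℤ} (ha : a ≠ 0) (hb : b ≠ 0) (x : ℤ) :
    signedSwap a b ha hb x = if x = a then b else if x = b then a else if x = -a then -b else
      if x = -b then -a else x := rfl

theorem isSignedPerm_signedSwap {n : ℕ} {a b : ℤ} (ha : a ≠ 0) (hb : b ≠ 0) (han : |a| ≤ n)
    (hbn : |b| ≤ n) : IsSignedPerm n (signedSwap a b ha hb) := by
  constructor <;> intro i <;> simp only [signedSwap_apply] <;> grind

/-- The hyperoctahedral group `B_n`. -/
def signedPermGroup (n : ℕ) : Subgroup (Equiv.Perm ℤ) where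
  carrier := {f | IsSignedPerm n f}
  one_mem' := IsSignedPerm.one n
  mul_mem' := IsSignedPerm.mul
  inv_mem' := IsSignedPerm.inv

theorem orbit_signedPermGroup {n : ℕ} {a : ℤ} (ha : a ≠ 0) (han : |a| ≤ n) :
    MulAction.orbit (signedPermGroup n) a = (Finset.Icc (-n : ℤ) n).erase 0 := by
  ext b
  rw [Finset.mem_coe, Finset.mem_erase, Finset.mem_Icc, ← abs_le]
  constructor
  · rintro ⟨⟨f, hf⟩, rfl⟩
    exact ⟨fun h => ha (f.injective (h.trans (IsSignedPerm.apply_zero hf).symm)),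
      IsSignedPerm.abs_apply_le hf han⟩
  · rintro ⟨hb, hbn⟩
    exact ⟨⟨_, isSignedPerm_signedSwap ha hb han hbn⟩, if_pos rfl⟩

/-- The stabilizer of `n + 1` in `B_{n+1}` is `B_n`. -/
def stabilizerEquiv (n : ℕ) :
    MulAction.stabilizer (signedPermGroup (n + 1)) (n + 1 : ℤ) ≃ signedPermGroup n :=
  (Equiv.subtypeSubtypeEquivSubtypeInter (IsSignedPerm (n + 1)) fun f => f (n + 1) = n + 1).trans <|
    Equiv.subtypeEquivRight fun _ => IsSignedPerm.succ_iff.symm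

instance : Unique (signedPermGroup 0) where
  default := 1
  uniq f := Subtype.ext <| Equiv.ext fun i => by
    obtain rfl | hi := eq_or_ne i 0
    · exact f.2.apply_zero
    · exact f.2.2 i (by simpa using hi)

open Nat in
theorem card_signedPermGroup (n : ℕ) : Nat.card (signedPermGroup n) = 2 ^ n * n ! := by
  induction n with
  | zero => simp
  | succ n ih =>
    have card_orbit :
        Nat.card (MulAction.orbit (signedPermGroup (n + 1)) (n + 1 : ℤ)) = 2 * (n + 1) := by
      rw [orbit_signedPermGroup (by omega) (by grind), SetLike.coe_sort_coe,
        Nat.card_eq_fintype_card, Fintype.card_coe,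
        Finset.card_erase_of_mem (by simp; omega), Int.card_Icc]
      omega
    rw [← Nat.card_congr (MulAction.orbitProdStabilizerEquivGroup (signedPermGroup (n + 1))
        (n + 1 : ℤ)), Nat.card_prod, Nat.card_congr (stabilizerEquiv n), ih, card_orbit,
      Nat.factorial_succ]
    ring

/-- Barbasch–Vogan: signed permutations of `B_n` are in bijection with pairs of
standard domino tableaux of the same shape, the shape being a partition of `2n`
with empty 2-core (i.e. tileable by dominoes). -/
theorem stmt13 (n : ℕ) (hn : 1 ≤ n) :
    Nonempty ({f : Equiv.Perm ℤ // IsSignedPerm n f} ≃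
      (μ : {μ : YoungDiagram // μ.cells.card = 2 * n ∧ ∃ t, IsDominoTiling μ t}) ×
        (SDT μ.1 n × SDT μ.1 n)) := by
  let shapeEquiv := Equiv.sigmaSubtypeEquivOfSubset (fun μ => SDT μ n × SDT μ n)
    (fun μ => μ.cells.card = 2 * n ∧ ∃ t, IsDominoTiling μ t)
    fun μ x => ⟨x.1.2.card_cells, x.1.1.1, x.1.2.1.1⟩
  have chainEquiv (μ : YoungDiagram) : SDT μ n ≃ SaturatedChain DominoCover ⊥ n μ :=
    (sdtEquiv μ n).trans (labellingEquivSaturatedChain n μ)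
  have card_pairs : Nat.card ((μ : {μ : YoungDiagram // μ.cells.card = 2 * n ∧
      ∃ t, IsDominoTiling μ t}) × (SDT μ.1 n × SDT μ.1 n)) = 2 ^ n * n.factorial := by
    rw [← isDifferential_dominoCover.card_saturatedChain_pairs not_dominoCover_bot n]
    exact Nat.card_congr <| shapeEquiv.trans <|
      Equiv.sigmaCongrRight fun μ => (chainEquiv μ).prodCongr (chainEquiv μ)
  have card_perms : Nat.card {f : Equiv.Perm ℤ // IsSignedPerm n f} = 2 ^ n * n.factorial :=
    card_signedPermGroup n
  have card_ne_zero : 2 ^ n * n.factorial ≠ 0 := by positivity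
  have := Nat.finite_of_card_ne_zero (card_perms ▸ card_ne_zero)
  have := Nat.finite_of_card_ne_zero (card_pairs ▸ card_ne_zero)
  exact Finite.card_eq.mp (card_perms.trans card_pairs.symm)
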